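/- Let M be an acyclic module over a finite alphabet Λ with input set I and node set S, let ω : I → S be total, and let F = ↻_ω M. Let (x_1,…,x_c) and (x'_1,…,x'_c) be two attractors of size c of F, i.e. F(x_j) = x_{j+1} for j < c, F(x_c) = x_1, and similarly for the x'_j, with both orbits of exact period c. If for every 1 ≤ j ≤ c and every α ∈ I one has (x_j)_{ω(α)} = (x'_j)_{ω(α)}, then x_j = x'_j for every j. -/

import Mathlib

/-- A module over alphabet `Λ` with node set `S` and input set `I`:
a family of local functions `f s : Λ^S → Λ^I → Λ`. -/
structure AModule (Λ S I : Type) where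
  f : S → (S → Λ) → (I → Λ) → Λ

namespace AModule

variable {Λ S I : Type}

/-- One-step update `M(x,i)`. -/
def upd (M : AModule Λ S I) (x : S → Λ) (i : I → Λ) : S → Λ :=
  fun s => M.f s x i

/-- Iterated update `M(x,(i_1,…,i_m))`, defined by
`M(x,∅) = x` and `M(x,(i_1,…,i_m)) = M(M(x,i_1),(i_2,…,i_m))`. -/
def seqUpd (M : AModule Λ S I) (x : S → Λ) {m : ℕ} (J : Fin m → I → Λ) : S → Λ :=
  (List.ofFn J).foldl M.upd x

/-- Node `s` influences node `s'`: two configurations over `S ∪ I` differing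
exactly at `s` (so with the same input part) on which `f_{s'}` differs. -/
def Influences (M : AModule Λ S I) (s s' : S) : Prop :=
  ∃ (x x' : S → Λ) (i : I → Λ),
    (∀ r, r ≠ s → x r = x' r) ∧ x s ≠ x' s ∧ M.f s' x i ≠ M.f s' x' i

/-- `M` is acyclic: its interaction digraph has no directed cycle. -/
def Acyclic (M : AModule Λ S I) : Prop :=
  ∀ s, ¬ Relation.TransGen M.Influences s s

/-- `O` is an output function of delay `m` for node `s`. -/
def IsOutputFn (M : AModule Λ S I) (s : S) {m : ℕ}
    (O : (Fin m → I → Λ) → Λ) : Prop :=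
  ∀ (x : S → Λ) (J : Fin m → I → Λ), M.seqUpd x J s = O J

/-- The set of delays `m ≥ 1` for which `s` admits an output function. -/
def delaySet (M : AModule Λ S I) (s : S) : Set ℕ :=
  {m | 1 ≤ m ∧ ∃ O : (Fin m → I → Λ) → Λ, M.IsOutputFn s O}

/-- The complete recursive wiring `↻_ω M` as a map on configurations:
`F(x)_s = f_s(x, (x_{ω(α)})_{α ∈ I})`. -/
def wireF (M : AModule Λ S I) (ω : I → S) : (S → Λ) → (S → Λ) :=
  fun x => M.upd x (fun α => x (ω α))

/-- The input sequence of length `k` generated by `x`: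
`Ĵ(x)^k_ℓ = F^{ℓ-1}(x)|_{ω(I)}`. -/
def genSeq (M : AModule Λ S I) (ω : I → S) (x : S → Λ) (k : ℕ) :
    Fin k → I → Λ :=
  fun ℓ α => (M.wireF ω)^[ℓ.val] x (ω α)

end AModule

/-! A node depends only on its influencers, so once the inputs are fixed, its value at the next time
step is determined by the current values of those influencers. When the trajectories extend
backwards forever, induction along the well-founded influence relation therefore determines every
node at all times at once, from the inputs alone. In a complete wiring, the inputs are the values at
the output nodes `ω α`. -/

namespace AModule

section LocalFunctions

variable {Λ S I : Type} {M : AModule Λ S I} {s : S}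

theorem f_update_of_not_influences [DecidableEq S] {r : S} (h : ¬ M.Influences r s)
    (x : S → Λ) (a : Λ) (i : I → Λ) : M.f s (Function.update x r a) i = M.f s x i := by
  by_contra hne
  have ha : a ≠ x r := by
    rintro rfl
    exact hne (by rw [Function.update_eq_self])
  exact h ⟨Function.update x r a, x, i, fun _ hq => Function.update_of_ne hq a x,
    by rwa [Function.update_self], hne⟩

theorem f_piecewise_of_not_influences [DecidableEq S] {T : Finset S}
    (h : ∀ r ∈ T, ¬ M.Influences r s) (x x' : S → Λ) (i : I → Λ) :
    M.f s (T.piecewise x' x) i = M.f s x i := by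
  induction T using Finset.induction_on with
  | empty => rw [Finset.piecewise_empty]
  | insert r T _ ih =>
    rw [Finset.piecewise_insert, f_update_of_not_influences (h r (Finset.mem_insert_self r T))]
    exact ih fun q hq => h q (Finset.mem_insert_of_mem hq)

theorem f_congr_of_influences {x x' : S → Λ} (hfin : {r | x r ≠ x' r}.Finite)
    (h : ∀ r, M.Influences r s → x r = x' r) (i : I → Λ) : M.f s x i = M.f s x' i := by
  classical
  have hx' : hfin.toFinset.piecewise x' x = x' := by
    ext r
    by_cases hr : x r = x' r <;> simp [Finset.piecewise, hr]
  rw [← f_piecewise_of_not_influences (T := hfin.toFinset) (x := x) (x' := x'), hx']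
  exact fun r hr hinf => hfin.mem_toFinset.mp hr (h r hinf)

end LocalFunctions

section Trajectories

variable {Λ S I : Type} [Finite S] {M : AModule Λ S I}

theorem Acyclic.wellFounded_influences (hM : M.Acyclic) : WellFounded M.Influences :=
  have : Std.Irrefl (Relation.TransGen M.Influences) := ⟨hM⟩
  Subrelation.wf Relation.TransGen.single (Finite.wellFounded_of_trans_of_irrefl _)

theorem Acyclic.eq_of_upd_eq (hM : M.Acyclic) {ι : Type*} {σ : ι → ι}
    (hσ : Function.Surjective σ) {i : ι → I → Λ} {x x' : ι → S → Λ}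
    (hx : ∀ j, M.upd (x j) (i j) = x (σ j)) (hx' : ∀ j, M.upd (x' j) (i j) = x' (σ j)) :
    x = x' := by
  suffices h : ∀ s j, x j s = x' j s from funext₂ fun j s => h s j
  intro s
  induction s using hM.wellFounded_influences.induction with
  | _ s ih =>
    refine hσ.forall.mpr fun j => ?_
    calc x (σ j) s = M.f s (x j) (i j) := (congrFun (hx j) s).symm
      _ = M.f s (x' j) (i j) := f_congr_of_influences (Set.toFinite _) (fun r hr => ih r hr j) _
      _ = x' (σ j) s := congrFun (hx' j) s

end Trajectories

end AModule

/-- The map `σ` is the time step on an arbitrary index type; for an attractor of size `c` it is the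
cyclic successor on `Fin c`. -/
theorem statement9_general {Λ S I : Type} [Finite S] {M : AModule Λ S I} (hM : M.Acyclic)
    {ω : I → S} {ι : Type*} {σ : ι → ι} (hσ : Function.Surjective σ) {x x' : ι → S → Λ}
    (hx : ∀ j, M.wireF ω (x j) = x (σ j)) (hx' : ∀ j, M.wireF ω (x' j) = x' (σ j))
    (hproj : ∀ j α, x j (ω α) = x' j (ω α)) : x = x' := by
  have hinput j : (fun α => x j (ω α)) = fun α => x' j (ω α) := funext (hproj j)
  exact hM.eq_of_upd_eq hσ hx fun j => (congrArg (M.upd (x' j)) (hinput j)).trans (hx' j)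

/-- two attractors of size `c` of `F = ↻_ω M` that agree on the
output set `ω(I)` are equal. -/
theorem statement9 {Λ S I : Type} [Fintype Λ] [Fintype S] [Fintype I]
    (hΛ : 2 ≤ Fintype.card Λ)
    (M : AModule Λ S I) (hM : M.Acyclic) (ω : I → S)
    (c : ℕ) [NeZero c] (x x' : Fin c → S → Λ)
    (hx : ∀ j : Fin c, M.wireF ω (x j) = x (j + 1))
    (hx' : ∀ j : Fin c, M.wireF ω (x' j) = x' (j + 1))
    (hper : ∀ j : Fin c, Function.minimalPeriod (M.wireF ω) (x j) = c)
    (hper' : ∀ j : Fin c, Function.minimalPeriod (M.wireF ω) (x' j) = c)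
    (hproj : ∀ (j : Fin c) (α : I), x j (ω α) = x' j (ω α)) :
    ∀ j : Fin c, x j = x' j := by
  exact congrFun (statement9_general hM (add_right_surjective 1) hx hx' hproj)
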